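/- Expansion of homogeneous geometric lattices: Let n ≥ 3 and let L be a finite lattice with a rank function rk such that rk(⊥) = 0, rk(y) = rk(x) + 1 whenever y covers x, rk(⊤) = n, rk(x) + rk(y) ≥ rk(x∨y) + rk(x∧y) for all x, y ∈ L, and every element of L is a join of atoms (i.e., L is a geometric lattice of rank n). Let L̄ = L ∖ {⊥, ⊤} and let Δ(L̄) be the order complex of L̄. Assume L is homogeneous: the group of lattice automorphisms of L acts transitively on the set of maximal chains of L̄ (the chains with n−1 elements, i.e., the (n−2)-dimensional faces of Δ(L̄)). Then h^{n−3}(Δ(L̄)) ≥ f_{n−2}(Δ(L̄)) / ( f_{n−3}(Δ(L̄)) · Σ_{j=1}^{n−1} j! ). -/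

import Mathlib

open Finset

section Simplicial

variable {V : Type*} [DecidableEq V]

/-- `X` is a finite abstract simplicial complex: a finite family of nonempty finite sets
closed under taking nonempty subsets. -/
def IsComplex (X : Finset (Finset V)) : Prop :=
  (∀ σ ∈ X, σ.Nonempty) ∧ ∀ σ ∈ X, ∀ τ ⊆ σ, τ.Nonempty → τ ∈ X

/-- The `k`-dimensional faces of `X` (faces of cardinality `k+1`). -/
def faces (X : Finset (Finset V)) (k : ℕ) : Finset (Finset V) :=
  X.filter fun σ => σ.card = k + 1

/-- The support of a `k`-cochain. -/
def csupp (X : Finset (Finset V)) (k : ℕ) (φ : Finset V → ZMod 2) : Finset (Finset V) :=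
  (faces X k).filter fun σ => φ σ ≠ 0

/-- The norm of a `k`-cochain. -/
def cnorm (X : Finset (Finset V)) (k : ℕ) (φ : Finset V → ZMod 2) : ℕ :=
  (csupp X k φ).card

/-- The coboundary of a `k`-cochain, as a `(k+1)`-cochain. -/
def cob (X : Finset (Finset V)) (k : ℕ) (φ : Finset V → ZMod 2) : Finset V → ZMod 2 :=
  fun τ => ∑ σ ∈ (faces X k).filter (fun σ => σ ⊆ τ), φ σ

/-- The cosystolic norm of a `k`-cochain, with the reduced convention at `k = 0`. -/
noncomputable def cosys (X : Finset (Finset V)) (k : ℕ) (φ : Finset V → ZMod 2) : ℕ :=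
  if k = 0 then
    min (cnorm X 0 φ) (cnorm X 0 fun σ => 1 + φ σ)
  else
    sInf {m | ∃ ψ : Finset V → ZMod 2, m = cnorm X k fun τ => φ τ + cob X (k - 1) ψ τ}

/-- The `k`-th (coboundary) Cheeger constant, valued in `ℝ≥0∞` (`⊤` if no cochain has
positive cosystolic norm). -/
noncomputable def cheeger (X : Finset (Finset V)) (k : ℕ) : ENNReal :=
  sInf {r : ENNReal | ∃ φ : Finset V → ZMod 2, 0 < cosys X k φ ∧
    r = (cnorm X (k + 1) (cob X k φ) : ENNReal) / (cosys X k φ : ENNReal)}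

/-- The boundary of a `k`-chain, as a `(k-1)`-chain. -/
def bdry (X : Finset (Finset V)) (k : ℕ) (c : Finset V → ZMod 2) : Finset V → ZMod 2 :=
  fun τ => ∑ σ ∈ (faces X k).filter (fun σ => τ ⊆ σ), c σ

/-- A `k`-cycle, with the reduced convention at `k = 0`. -/
def IsCycle (X : Finset (Finset V)) (k : ℕ) (c : Finset V → ZMod 2) : Prop :=
  if k = 0 then ∑ σ ∈ faces X 0, c σ = 0
  else ∀ τ ∈ faces X (k - 1), bdry X k c τ = 0

/-- Evaluation of a `k`-cochain on a `k`-chain. -/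
def eval (X : Finset (Finset V)) (k : ℕ) (φ c : Finset V → ZMod 2) : ZMod 2 :=
  ∑ σ ∈ faces X k, φ σ * c σ

end Simplicial

/-!
Let `c` assign to each face `σ` of `X` a chain in such a way that `∂ (c σ) = σ + c (∂ σ)` for all
`k`-faces `σ`. Dually, every `k`-cochain `φ` is, up to a coboundary, the cochain
`σ ↦ ⟨d φ, c σ⟩`, whose value at `σ` vanishes unless `c σ` meets the support of `d φ`. If a group
acts transitively on the `(k + 1)`-faces, averaging over the translates of `φ` bounds the
cosystolic norm of `φ` by `fₖ · S · ‖d φ‖ / fₖ₊₁`, where `S` bounds the size of the chains `c σ`.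

In a geometric lattice of rank `k + 3`, choose an atom `b x ≤ x` for each `x ≠ ⊥`. Given a chain
`x₀ < ⋯ < xₖ` of proper elements, put `xₖ₊₁ = ⊤`. The atoms `b x₀, …, b xₖ₊₁` are too few to
span `⊤`, so the joins of their subfamilies are proper, and the barycentric subdivision of the
simplex on them maps to the order complex. The same is true for the prisms between the chain and
this simplex: the joins of subfamilies of `b x₀, …, b xⱼ`, `j ≤ k`, are at most `xⱼ` and hence
form chains with `xⱼ < ⋯ < xₖ`. Together these cells are the contraction `c`, with
`S = ∑ j ∈ Icc 1 (k + 2), j !`.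
-/

section Cochains

variable {V : Type*} {X : Finset (Finset V)} {k : ℕ} {σ τ : Finset V} {φ ψ c : Finset V → ZMod 2}

lemma mem_faces : σ ∈ faces X k ↔ σ ∈ X ∧ #σ = k + 1 :=
  mem_filter

lemma cnorm_congr (h : ∀ σ ∈ faces X k, φ σ = ψ σ) : cnorm X k φ = cnorm X k ψ :=
  congrArg card (filter_congr fun σ hσ => by rw [h σ hσ])

variable [DecidableEq V]

/-- The coboundary of the full simplex on `V`, augmented by the empty face. It agrees with `cob`
on the faces of a complex, and on vertices it is the constant `ψ ∅`, so that the reduced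
convention in `cosys` needs no separate treatment. -/
def reducedCob (ψ : Finset V → ZMod 2) (σ : Finset V) : ZMod 2 :=
  ∑ x ∈ σ, ψ (σ.erase x)

lemma IsComplex.erase_mem_faces (hX : IsComplex X) (hτ : τ ∈ faces X (k + 1)) {x : V}
    (hx : x ∈ τ) : τ.erase x ∈ faces X k := by
  obtain ⟨hτX, hcard⟩ := mem_faces.1 hτ
  have hcard' : #(τ.erase x) = k + 1 := by rw [card_erase_of_mem hx, hcard, Nat.add_sub_cancel]
  exact mem_faces.2 ⟨hX.2 τ hτX _ (erase_subset x τ) (card_pos.1 (by omega)), hcard'⟩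

lemma IsComplex.cob_eq_reducedCob (hX : IsComplex X) (hτ : τ ∈ faces X (k + 1)) :
    cob X k φ τ = reducedCob φ τ := by
  have hfaces : {σ ∈ faces X k | σ ⊆ τ} = τ.image τ.erase := by
    ext σ
    simp only [mem_filter, mem_image]
    refine ⟨fun ⟨hσ, hsub⟩ => ?_, ?_⟩
    · have hcov : σ ⋖ τ := covBy_iff_card_sdiff_eq_one.2
        ⟨hsub, by rw [card_sdiff_of_subset hsub, (mem_faces.1 hσ).2, (mem_faces.1 hτ).2]; omega⟩
      obtain ⟨x, hx, rfl⟩ := hcov.exists_finset_erase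
      exact ⟨x, hx, rfl⟩
    · rintro ⟨x, hx, rfl⟩
      exact ⟨hX.erase_mem_faces hτ hx, erase_subset x τ⟩
  rw [cob, hfaces, sum_image (erase_injOn τ), reducedCob]

lemma cosys_le_cnorm_add_reducedCob (hX : IsComplex X) :
    cosys X k φ ≤ cnorm X k fun σ => φ σ + reducedCob ψ σ := by
  rcases k with _ | k
  · have hvertex : ∀ σ ∈ faces X 0, reducedCob ψ σ = ψ ∅ := fun σ hσ => by
      obtain ⟨x, rfl⟩ := card_eq_one.1 (mem_faces.1 hσ).2
      simp [reducedCob]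
    have hcnorm : cnorm X 0 (fun σ => φ σ + reducedCob ψ σ) = cnorm X 0 fun σ => ψ ∅ + φ σ :=
      cnorm_congr fun σ hσ => by rw [hvertex σ hσ, add_comm]
    rw [cosys, if_pos rfl, hcnorm]
    obtain h | h := (by decide : ∀ z : ZMod 2, z = 0 ∨ z = 1) (ψ ∅)
    · simp only [h, zero_add, min_le_left]
    · simp only [h, min_le_right]
  · rw [cosys, if_neg k.succ_ne_zero]
    exact Nat.sInf_le ⟨ψ, cnorm_congr fun σ hσ => by
      rw [Nat.add_sub_cancel, hX.cob_eq_reducedCob hσ]⟩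

lemma eval_cob : eval X (k + 1) (cob X k φ) c = eval X k φ (bdry X (k + 1) c) := by
  simp only [eval, cob, bdry, sum_mul, mul_sum, sum_filter, ite_mul, mul_ite, zero_mul, mul_zero]
  exact sum_comm

/-- A contracting homotopy of the augmented chain complex in dimension `k`: the chains `c σ`
satisfy `∂ (c σ) = σ + c (∂ σ)` for every `k`-face `σ`. -/
def IsContraction (X : Finset (Finset V)) (k : ℕ) (c : Finset V → Finset V → ZMod 2) : Prop :=
  ∀ σ ∈ faces X k, ∀ τ ∈ faces X k,
    bdry X (k + 1) (c σ) τ = (if σ = τ then 1 else 0) + ∑ x ∈ σ, c (σ.erase x) τ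

lemma IsContraction.eval_cob {c : Finset V → Finset V → ZMod 2} (hc : IsContraction X k c)
    (hσ : σ ∈ faces X k) :
    eval X (k + 1) (cob X k φ) (c σ) = φ σ + reducedCob (fun ρ => eval X k φ (c ρ)) σ := by
  calc eval X (k + 1) (cob X k φ) (c σ)
      = ∑ τ ∈ faces X k, φ τ * ((if σ = τ then 1 else 0) + ∑ x ∈ σ, c (σ.erase x) τ) := by
        rw [_root_.eval_cob, eval]
        exact sum_congr rfl fun τ hτ => by rw [hc σ hσ τ hτ]
    _ = φ σ + ∑ τ ∈ faces X k, ∑ x ∈ σ, φ τ * c (σ.erase x) τ := by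
        simp only [mul_add, sum_add_distrib, mul_ite, mul_one, mul_zero, sum_ite_eq, if_pos hσ,
          mul_sum]
    _ = φ σ + reducedCob (fun ρ => eval X k φ (c ρ)) σ := by
        rw [sum_comm]
        rfl

end Cochains

section Averaging

open scoped Pointwise

lemma card_mul_card_filter_smul_mem {G α : Type*} [Fintype G] [Group G] [MulAction G α]
    [DecidableEq α] {F A : Finset α} (hF : ∀ g : G, ∀ x ∈ F, g • x ∈ F)
    (htrans : ∀ x ∈ F, ∀ y ∈ F, ∃ g : G, g • x = y) (hA : A ⊆ F) {x : α} (hx : x ∈ F) :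
    #F * #{g : G | g • x ∈ A} = Fintype.card G * #A := by
  have hconst : ∀ y ∈ F, #{g : G | g • y ∈ A} = #{g : G | g • x ∈ A} := fun y hy => by
    obtain ⟨h, rfl⟩ := htrans x hx y hy
    exact card_equiv (Equiv.mulRight h) fun g => by simp [mul_smul]
  have htranslate : ∀ g : G, {y ∈ F | g • y ∈ A} = g⁻¹ • A := fun g => by
    ext y
    rw [mem_filter, mem_inv_smul_finset_iff, and_iff_right_iff_imp]
    exact fun hy => inv_smul_smul g y ▸ hF g⁻¹ _ (hA hy)
  calc #F * #{g : G | g • x ∈ A}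
      = ∑ y ∈ F, #{g : G | g • y ∈ A} := by rw [sum_congr rfl hconst, sum_const, smul_eq_mul]
    _ = ∑ g : G, #{y ∈ F | g • y ∈ A} := by
        simp only [card_filter]
        exact sum_comm
    _ = Fintype.card G * #A := by simp [htranslate]

variable {V G : Type*} [DecidableEq V] [Group G] [MulAction G V] {X : Finset (Finset V)} {k S : ℕ}
  {φ ψ : Finset V → ZMod 2} {c : Finset V → Finset V → ZMod 2}

lemma smul_mem_faces (hG : ∀ g : G, ∀ σ ∈ X, g • σ ∈ X) (g : G) {σ : Finset V}
    (hσ : σ ∈ faces X k) : g • σ ∈ faces X k :=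
  mem_faces.2 ⟨hG g σ (mem_faces.1 hσ).1, by rw [card_smul_finset, (mem_faces.1 hσ).2]⟩

lemma cnorm_comp_smul (hG : ∀ g : G, ∀ σ ∈ X, g • σ ∈ X) (g : G) :
    cnorm X k (fun σ => φ (g • σ)) = cnorm X k φ := by
  refine card_equiv (MulAction.toPerm g) fun σ => ?_
  have hiff : g • σ ∈ faces X k ↔ σ ∈ faces X k :=
    ⟨fun h => inv_smul_smul g σ ▸ smul_mem_faces hG g⁻¹ h, smul_mem_faces hG g⟩
  simp only [csupp, mem_filter, MulAction.toPerm_apply, hiff]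

lemma reducedCob_comp_smul (g : G) (σ : Finset V) :
    reducedCob (fun ρ => φ (g • ρ)) σ = reducedCob φ (g • σ) := by
  refine sum_equiv (MulAction.toPerm g) (fun x => (smul_mem_smul_finset_iff g).symm) fun x _ => ?_
  simp only [MulAction.toPerm_apply, ← sdiff_singleton_eq_erase, smul_finset_sdiff,
    smul_finset_singleton]

lemma cosys_le_cnorm_comp_smul_add_reducedCob (hX : IsComplex X)
    (hG : ∀ g : G, ∀ σ ∈ X, g • σ ∈ X) (g : G) :
    cosys X k φ ≤ cnorm X k fun σ => φ (g • σ) + reducedCob ψ σ := by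
  refine (cosys_le_cnorm_add_reducedCob (ψ := fun ρ => ψ (g⁻¹ • ρ)) hX).trans_eq ?_
  rw [← cnorm_comp_smul hG g]
  simp only [reducedCob_comp_smul, inv_smul_smul]

lemma IsContraction.cosys_le_sum_card (hc : IsContraction X k c) (hX : IsComplex X)
    (hG : ∀ g : G, ∀ σ ∈ X, g • σ ∈ X) (g : G) :
    cosys X k φ ≤ ∑ σ ∈ faces X k,
      #{τ ∈ csupp X (k + 1) (c σ) | g • τ ∈ csupp X (k + 1) (cob X k φ)} := by
  set φg : Finset V → ZMod 2 := fun σ => φ (g • σ)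
  refine (cosys_le_cnorm_comp_smul_add_reducedCob (ψ := fun ρ => eval X k φg (c ρ))
    hX hG g).trans ?_
  rw [← cnorm_congr fun σ hσ => hc.eval_cob (φ := φg) hσ, cnorm, csupp, card_filter]
  refine sum_le_sum fun σ _ => ?_
  split_ifs with hne
  · obtain ⟨τ, hτ, hτne⟩ := exists_ne_zero_of_sum_ne_zero hne
    have hcob : cob X k φg τ = cob X k φ (g • τ) := by
      rw [hX.cob_eq_reducedCob hτ, hX.cob_eq_reducedCob (smul_mem_faces hG g hτ),
        reducedCob_comp_smul]
    refine card_pos.2 ⟨τ, mem_filter.2 ⟨mem_filter.2 ⟨hτ, right_ne_zero_of_mul hτne⟩,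
      mem_filter.2 ⟨smul_mem_faces hG g hτ, ?_⟩⟩⟩
    exact hcob ▸ left_ne_zero_of_mul hτne
  · exact Nat.zero_le _

lemma IsContraction.card_mul_cosys_le [Finite G] (hc : IsContraction X k c) (hX : IsComplex X)
    (hG : ∀ g : G, ∀ σ ∈ X, g • σ ∈ X)
    (htrans : ∀ σ ∈ faces X (k + 1), ∀ τ ∈ faces X (k + 1), ∃ g : G, g • σ = τ)
    (hS : ∀ σ ∈ faces X k, cnorm X (k + 1) (c σ) ≤ S) :
    #(faces X (k + 1)) * cosys X k φ ≤
      #(faces X k) * S * cnorm X (k + 1) (cob X k φ) := by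
  have := Fintype.ofFinite G
  set F := faces X (k + 1)
  set A := csupp X (k + 1) (cob X k φ)
  have hcount : ∀ τ ∈ F, #F * #{g : G | g • τ ∈ A} = Fintype.card G * #A := fun τ hτ =>
    card_mul_card_filter_smul_mem (fun g _ => smul_mem_faces hG g) htrans (filter_subset _ _) hτ
  refine Nat.le_of_mul_le_mul_left ?_ (Fintype.card_pos (α := G))
  calc Fintype.card G * (#F * cosys X k φ)
      = #F * ∑ _g : G, cosys X k φ := by rw [sum_const, card_univ, smul_eq_mul, mul_left_comm]
    _ ≤ #F * ∑ g : G, ∑ σ ∈ faces X k, #{τ ∈ csupp X (k + 1) (c σ) | g • τ ∈ A} :=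
        Nat.mul_le_mul_left _ (sum_le_sum fun g _ => hc.cosys_le_sum_card hX hG g)
    _ = ∑ σ ∈ faces X k, ∑ τ ∈ csupp X (k + 1) (c σ), #F * #{g : G | g • τ ∈ A} := by
        simp only [card_filter, mul_sum]
        rw [sum_comm]
        exact sum_congr rfl fun σ _ => sum_comm
    _ = ∑ σ ∈ faces X k, cnorm X (k + 1) (c σ) * (Fintype.card G * #A) :=
        sum_congr rfl fun σ _ => sum_const_nat fun τ hτ => hcount τ (filter_subset _ _ hτ)
    _ ≤ ∑ _σ ∈ faces X k, S * (Fintype.card G * #A) :=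
        sum_le_sum fun σ hσ => Nat.mul_le_mul_right _ (hS σ hσ)
    _ = Fintype.card G * (#(faces X k) * S * #A) := by
        rw [sum_const, smul_eq_mul]
        ring

theorem IsContraction.div_le_cheeger [Finite G] (hc : IsContraction X k c) (hX : IsComplex X)
    (hG : ∀ g : G, ∀ σ ∈ X, g • σ ∈ X)
    (htrans : ∀ σ ∈ faces X (k + 1), ∀ τ ∈ faces X (k + 1), ∃ g : G, g • σ = τ)
    (hS : ∀ σ ∈ faces X k, cnorm X (k + 1) (c σ) ≤ S) :
    (#(faces X (k + 1)) : ENNReal) / (#(faces X k) * S) ≤ cheeger X k := by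
  refine le_sInf ?_
  rintro _ ⟨φ, hφ, rfl⟩
  have hφ' : (cosys X k φ : ENNReal) ≠ 0 := Nat.cast_ne_zero.2 hφ.ne'
  refine ENNReal.div_le_of_le_mul ?_
  rw [mul_comm, ← mul_div_assoc, ENNReal.le_div_iff_mul_le (.inl hφ') (.inl (by simp))]
  exact_mod_cast hc.card_mul_cosys_le hX hG htrans hS

end Averaging

section SimplicialPolynomials

open MvPolynomial

variable {V : Type*}

/-- The simplicial boundary, as a derivation: a simplex with possibly repeated vertices is a
monomial, a chain over `ZMod 2` is a polynomial, and the join of simplices is their product. -/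
noncomputable def boundary (V : Type*) :
    Derivation (ZMod 2) (MvPolynomial V (ZMod 2)) (MvPolynomial V (ZMod 2)) :=
  mkDerivation (ZMod 2) fun _ => 1

lemma boundary_X_mul (a : V) (p : MvPolynomial V (ZMod 2)) :
    boundary V (X a * p) = p + X a * boundary V p := by
  rw [Derivation.leibniz, boundary, mkDerivation_X, smul_eq_mul, smul_eq_mul, mul_one, add_comm]

lemma boundary_eq_sum_pderiv [Fintype V] (p : MvPolynomial V (ZMod 2)) :
    boundary V p = ∑ x, pderiv x p := by
  classical
  have hsum (q : MvPolynomial V (ZMod 2)) :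
      (∑ x, pderiv x : Derivation (ZMod 2) _ (MvPolynomial V (ZMod 2))) q = ∑ x, pderiv x q :=
    map_sum ((Pi.evalAddMonoidHom _ q).comp Derivation.coeFnAddMonoidHom) _ _
  have hboundary : boundary V = ∑ x, pderiv x := derivation_ext fun a => by
    simp [boundary, hsum, pderiv_X, Pi.single_apply]
  rw [hboundary, hsum]

lemma card_support_X_mul (a : V) (p : MvPolynomial V (ZMod 2)) :
    #(X a * p).support = #p.support := by
  rw [support_X_mul, card_map]

lemma card_support_sum_le {ι : Type*} (s : Finset ι) (p : ι → MvPolynomial V (ZMod 2)) :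
    #(∑ i ∈ s, p i).support ≤ ∑ i ∈ s, #(p i).support := by
  classical
  exact (card_le_card support_sum).trans card_biUnion_le

lemma card_support_add_le (p q : MvPolynomial V (ZMod 2)) :
    #(p + q).support ≤ #p.support + #q.support := by
  classical
  exact (card_le_card support_add).trans (card_union_le _ _)

/-- The chain underlying a polynomial; degenerate simplices, that is, monomials which are not
squarefree, are discarded. -/
noncomputable def coeffChain (p : MvPolynomial V (ZMod 2)) (σ : Finset V) : ZMod 2 :=
  coeff (Finsupp.indicator σ fun _ _ => 1) p

lemma coeffChain_add (p q : MvPolynomial V (ZMod 2)) (σ : Finset V) :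
    coeffChain (p + q) σ = coeffChain p σ + coeffChain q σ :=
  coeff_add _ p q

lemma coeffChain_sum {ι : Type*} (s : Finset ι) (p : ι → MvPolynomial V (ZMod 2)) (σ : Finset V) :
    coeffChain (∑ i ∈ s, p i) σ = ∑ i ∈ s, coeffChain (p i) σ :=
  coeff_sum s p _

lemma support_indicator_one (σ : Finset V) :
    (Finsupp.indicator σ fun _ _ => 1 : V →₀ ℕ).support = σ := by
  classical
  ext x
  simp [Finsupp.indicator_apply]

lemma indicator_one_injective :
    Function.Injective fun σ : Finset V => (Finsupp.indicator σ fun _ _ => 1 : V →₀ ℕ) :=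
  Function.LeftInverse.injective (g := Finsupp.support) support_indicator_one

lemma coeffChain_prod_X [DecidableEq V] (σ τ : Finset V) :
    coeffChain (∏ x ∈ σ, X x) τ = if σ = τ then 1 else 0 := by
  have h := coeff_prod_X_pow (R := ZMod 2) (Finsupp.indicator τ fun _ _ => 1) (fun _ => 1) σ
  simp only [pow_one] at h
  rw [coeffChain, h]
  simp only [indicator_one_injective.eq_iff, eq_comm]

lemma cnorm_coeffChain_le (K : Finset (Finset V)) (k : ℕ) (p : MvPolynomial V (ZMod 2)) :
    cnorm K k (coeffChain p) ≤ #p.support :=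
  card_le_card_of_injOn _ (fun _ hσ => mem_support_iff.2 (mem_filter.1 hσ).2)
    indicator_one_injective.injOn

lemma coeffChain_boundary [Fintype V] [DecidableEq V] (p : MvPolynomial V (ZMod 2)) (τ : Finset V) :
    coeffChain (boundary V p) τ = ∑ x ∈ τᶜ, coeffChain p (insert x τ) := by
  have hmem : ∀ x ∈ τ, coeffChain (pderiv x p) τ = 0 := fun x hx => by
    simp [coeffChain, coeff_pderiv, Finsupp.indicator_apply, hx, CharTwo.add_self_eq_zero]
  have hcompl : ∀ x ∈ τᶜ, coeffChain (pderiv x p) τ = coeffChain p (insert x τ) := fun x hx => by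
    have hinsert : (Finsupp.indicator τ fun _ _ => 1) + Finsupp.single x 1 =
        (Finsupp.indicator (insert x τ) fun _ _ => 1 : V →₀ ℕ) := by
      ext y
      by_cases hy : y = x
      · subst hy
        simp [Finsupp.indicator_apply, mem_compl.1 hx]
      · simp [Finsupp.indicator_apply, hy]
    simp [coeffChain, coeff_pderiv, hinsert, Finsupp.indicator_apply, mem_compl.1 hx]
  rw [boundary_eq_sum_pderiv, coeffChain_sum, ← sum_add_sum_compl τ, sum_eq_zero hmem, zero_add,
    sum_congr rfl hcompl]

lemma bdry_coeffChain [Finite V] [DecidableEq V] {K : Finset (Finset V)} {k : ℕ}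
    {p : MvPolynomial V (ZMod 2)}
    (hp : ∀ σ, σ.Nonempty → coeffChain p σ ≠ 0 → σ ∈ K) {τ : Finset V} (hτ : τ ∈ faces K k) :
    bdry K (k + 1) (coeffChain p) τ = coeffChain (boundary V p) τ := by
  have := Fintype.ofFinite V
  have hcard {x : V} (hx : x ∉ τ) : #(insert x τ) = k + 1 + 1 := by
    rw [card_insert_of_notMem hx, (mem_faces.1 hτ).2]
  have hfaces : {σ ∈ faces K (k + 1) | τ ⊆ σ} = {x ∈ τᶜ | insert x τ ∈ K}.image (insert · τ) := by
    ext σ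
    simp only [mem_filter, mem_image, mem_compl, mem_faces]
    constructor
    · rintro ⟨⟨hσK, hσ⟩, hsub⟩
      have hcov : τ ⋖ σ := covBy_iff_card_sdiff_eq_one.2
        ⟨hsub, by rw [card_sdiff_of_subset hsub, hσ, (mem_faces.1 hτ).2]; omega⟩
      obtain ⟨x, hx, rfl⟩ := hcov.exists_finset_insert
      exact ⟨x, ⟨hx, hσK⟩, rfl⟩
    · rintro ⟨x, ⟨hx, hxK⟩, rfl⟩
      exact ⟨⟨hxK, hcard hx⟩, subset_insert x τ⟩
  have hinj : Set.InjOn (insert · τ) ({x ∈ τᶜ | insert x τ ∈ K} : Finset V) := fun x hx y _ h =>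
    (insert_inj (mem_compl.1 (mem_filter.1 hx).1)).1 h
  rw [bdry, hfaces, sum_image hinj, coeffChain_boundary]
  exact sum_filter_of_ne fun x _ => hp _ (insert_nonempty x τ)

end SimplicialPolynomials

section OrderComplex

open MvPolynomial

variable {L : Type*}

/-- `Δ` is the order complex of the subposet `s`. -/
def IsOrderComplex [LE L] (Δ : Finset (Finset L)) (s : Set L) : Prop :=
  ∀ σ, σ ∈ Δ ↔ σ.Nonempty ∧ (σ : Set L) ⊆ s ∧ IsChain (· ≤ ·) (σ : Set L)

lemma isOrderComplex_Ioo_iff [PartialOrder L] [BoundedOrder L] {Δ : Finset (Finset L)} :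
    IsOrderComplex Δ (Set.Ioo ⊥ ⊤) ↔ ∀ σ : Finset L, σ ∈ Δ ↔
      σ.Nonempty ∧ (∀ a ∈ σ, a ≠ ⊥ ∧ a ≠ ⊤) ∧ ∀ a ∈ σ, ∀ b ∈ σ, a ≤ b ∨ b ≤ a := by
  have hproper (σ : Finset L) :
      (σ : Set L) ⊆ Set.Ioo ⊥ ⊤ ↔ ∀ a ∈ σ, a ≠ ⊥ ∧ a ≠ ⊤ := by
    simp only [Set.subset_def, mem_coe, Set.mem_Ioo, bot_lt_iff_ne_bot, lt_top_iff_ne_top]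
  have hchain (σ : Finset L) :
      IsChain (· ≤ ·) (σ : Set L) ↔ ∀ a ∈ σ, ∀ b ∈ σ, a ≤ b ∨ b ≤ a :=
    ⟨fun h _ ha _ hb => h.total ha hb, fun h _ ha _ hb _ => h _ ha _ hb⟩
  simp only [IsOrderComplex, hproper, hchain]

lemma IsOrderComplex.isComplex [LE L] {Δ : Finset (Finset L)} {s : Set L}
    (hΔ : IsOrderComplex Δ s) : IsComplex Δ := by
  refine ⟨fun σ hσ => ((hΔ σ).1 hσ).1, fun σ hσ τ hτσ hτ => ?_⟩
  obtain ⟨-, hs, hchain⟩ := (hΔ σ).1 hσ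
  have hsub : (τ : Set L) ⊆ σ := coe_subset.2 hτσ
  exact (hΔ τ).2 ⟨hτ, hsub.trans hs, hchain.mono hsub⟩

lemma IsOrderComplex.image_mem [PartialOrder L] [BoundedOrder L] [DecidableEq L]
    {Δ : Finset (Finset L)} (hΔ : IsOrderComplex Δ (Set.Ioo ⊥ ⊤)) (e : L ≃o L) {σ : Finset L}
    (hσ : σ ∈ Δ) : σ.image e ∈ Δ := by
  rw [isOrderComplex_Ioo_iff] at hΔ
  simpa [hΔ] using hσ

@[elab_as_elim]
lemma isChain_induction_on_max [PartialOrder L] [DecidableEq L] {p : Finset L → Prop}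
    {s : Finset L} (hs : IsChain (· ≤ ·) (s : Set L)) (empty : p ∅)
    (insert_max : ∀ a s, (∀ x ∈ s, x < a) → p s → p (insert a s)) : p s := by
  induction s using Finset.strongInduction with
  | H s ih =>
    obtain rfl | hne := s.eq_empty_or_nonempty
    · exact empty
    obtain ⟨a, ha⟩ := s.exists_maximal hne
    have hlt : ∀ x ∈ s.erase a, x < a := fun x hx => by
      obtain ⟨hxa, hxs⟩ := mem_erase.1 hx
      exact ((hs.total hxs ha.1).elim id (ha.2 hxs)).lt_of_ne hxa
    rw [← insert_erase ha.1]
    exact insert_max a _ hlt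
      (ih _ (erase_ssubset ha.1) (hs.mono (coe_subset.2 (erase_subset a s))))

/-- The polynomials whose monomials are supported on chains of the subposet `s`. -/
noncomputable def chainPolynomials [LE L] (s : Set L) :
    Submodule (ZMod 2) (MvPolynomial L (ZMod 2)) :=
  restrictSupport (ZMod 2) {m | IsChain (· ≤ ·) (m.support : Set L) ∧ (m.support : Set L) ⊆ s}

lemma chainPolynomials_mono [LE L] {s t : Set L} (h : s ⊆ t) :
    chainPolynomials s ≤ chainPolynomials t :=
  restrictSupport_mono _ fun _ hm => ⟨hm.1, hm.2.trans h⟩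

lemma one_mem_chainPolynomials [LE L] (s : Set L) : 1 ∈ chainPolynomials s :=
  (monomial_mem_restrictSupport (ZMod 2)).2 (.inl (by simp [IsChain]))

lemma X_mul_mem_chainPolynomials [PartialOrder L] [OrderBot L] {a : L}
    {p : MvPolynomial L (ZMod 2)} (hp : p ∈ chainPolynomials (Set.Ioc ⊥ a)) (ha : a ≠ ⊥) :
    X a * p ∈ chainPolynomials (Set.Ioc ⊥ a) := by
  classical
  rw [chainPolynomials, mem_restrictSupport_iff] at hp ⊢
  intro m hm
  rw [mem_coe, support_X_mul, mem_map] at hm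
  obtain ⟨m, hm, rfl⟩ := hm
  obtain ⟨hchain, hsub⟩ := hp hm
  have hsupport : (addLeftEmbedding (Finsupp.single a 1) m).support = insert a m.support := by
    ext x
    by_cases hx : x = a <;> simp [hx]
  rw [Set.mem_ofPred_eq, hsupport, coe_insert, Set.insert_subset_iff]
  exact ⟨hchain.insert fun x hx _ => .inr (hsub hx).2, ⟨bot_lt_iff_ne_bot.2 ha, le_rfl⟩, hsub⟩

lemma IsOrderComplex.mem_of_coeffChain_ne_zero [LE L] {Δ : Finset (Finset L)}
    {s : Set L} (hΔ : IsOrderComplex Δ s) {p : MvPolynomial L (ZMod 2)}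
    (hp : p ∈ chainPolynomials s) {σ : Finset L} (hσ : σ.Nonempty) (hne : coeffChain p σ ≠ 0) :
    σ ∈ Δ := by
  have h := (mem_restrictSupport_iff _).1 hp (mem_coe.2 (mem_support_iff.2 hne))
  rw [Set.mem_ofPred_eq, support_indicator_one] at h
  exact (hΔ σ).2 ⟨hσ, h.2, h.1⟩

end OrderComplex

section Subdivision

open MvPolynomial
open scoped Nat

lemma sum_sum_erase_eq_zero {ι R : Type*} [DecidableEq ι] [Ring R] [CharP R 2] (s : Finset ι)
    (f : Finset ι → R) : ∑ x ∈ s, ∑ y ∈ s.erase x, f ((s.erase x).erase y) = 0 := by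
  rw [sum_sigma']
  refine sum_involution (fun p _ => ⟨p.2, p.1⟩) ?_ ?_ ?_ fun _ _ => rfl
  · intro p _
    rw [erase_right_comm, CharTwo.add_self_eq_zero]
  · rintro ⟨x, y⟩ hp _ h
    simp_all
  · rintro ⟨x, y⟩ hp
    simp_all [eq_comm]

lemma sum_erase_insert {ι M : Type*} [DecidableEq ι] [AddCommMonoid M] {a : ι} {s : Finset ι}
    (ha : a ∉ s) (f : Finset ι → M) :
    ∑ x ∈ insert a s, f ((insert a s).erase x) = f s + ∑ x ∈ s, f (insert a (s.erase x)) := by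
  rw [sum_insert ha, erase_insert ha]
  exact congrArg _ (sum_congr rfl fun x hx =>
    congrArg f (erase_insert_of_ne (ne_of_mem_of_not_mem hx ha).symm))

section Simplex

variable {ι L : Type*} [DecidableEq ι] [SemilatticeSup L] [OrderBot L]

/-- The image of the barycentric subdivision of the simplex `J` under the map which sends the
barycenter of a face `I` to the join of the elements `b i`, `i ∈ I`. -/
noncomputable def subdivision (b : ι → L) (J : Finset ι) : MvPolynomial L (ZMod 2) :=
  if J = ∅ then 1 else X (J.sup b) * ∑ i ∈ J.attach, subdivision b (J.erase i)
termination_by #J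
decreasing_by exact card_erase_lt_of_mem i.2

variable (b : ι → L) {J : Finset ι}

lemma subdivision_empty : subdivision b ∅ = 1 := by
  rw [subdivision, if_pos rfl]

lemma subdivision_of_nonempty (hJ : J.Nonempty) :
    subdivision b J = X (J.sup b) * ∑ i ∈ J, subdivision b (J.erase i) := by
  rw [subdivision, if_neg hJ.ne_empty, sum_attach J fun i => subdivision b (J.erase i)]

lemma boundary_subdivision (J : Finset ι) :
    boundary L (subdivision b J) = ∑ i ∈ J, subdivision b (J.erase i) := by
  induction J using Finset.strongInduction with
  | H J ih =>
    obtain rfl | hJ := J.eq_empty_or_nonempty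
    · simp [subdivision_empty]
    have hcancel : boundary L (∑ i ∈ J, subdivision b (J.erase i)) = 0 := by
      rw [map_sum, sum_congr rfl fun i hi => ih _ (erase_ssubset hi), sum_sum_erase_eq_zero]
    rw [subdivision_of_nonempty b hJ, boundary_X_mul, hcancel, mul_zero, add_zero]

lemma card_support_subdivision_le (J : Finset ι) : #(subdivision b J).support ≤ (#J)! := by
  induction J using Finset.strongInduction with
  | H J ih =>
    obtain rfl | hJ := J.eq_empty_or_nonempty
    · simp [subdivision_empty]
    calc #(subdivision b J).support
        ≤ ∑ i ∈ J, #(subdivision b (J.erase i)).support := by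
          rw [subdivision_of_nonempty b hJ, card_support_X_mul]
          exact card_support_sum_le J _
      _ ≤ ∑ i ∈ J, (#J - 1)! := sum_le_sum fun i hi => by
          simpa only [card_erase_of_mem hi] using ih _ (erase_ssubset hi)
      _ = (#J)! := by
          rw [sum_const, smul_eq_mul, Nat.mul_factorial_pred hJ.card_ne_zero]

variable {b} in
lemma subdivision_mem_chainPolynomials (hb : ∀ i ∈ J, b i ≠ ⊥) :
    subdivision b J ∈ chainPolynomials (Set.Ioc ⊥ (J.sup b)) := by
  induction J using Finset.strongInduction with
  | H J ih =>
    obtain rfl | hJ := J.eq_empty_or_nonempty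
    · exact subdivision_empty b ▸ one_mem_chainPolynomials _
    rw [subdivision_of_nonempty b hJ]
    refine X_mul_mem_chainPolynomials (sum_mem fun i hi => ?_) ?_
    · exact chainPolynomials_mono (Set.Ioc_subset_Ioc_right (sup_mono (erase_subset i J)))
        (ih _ (erase_ssubset hi) fun j hj => hb j (mem_of_mem_erase hj))
    · obtain ⟨i, hi⟩ := hJ
      exact ne_bot_of_le_ne_bot (hb i hi) (le_sup hi)

end Simplex

section Prism

variable {L : Type*} [DecidableEq L] [SemilatticeSup L] [OrderBot L] [DecidableLE L]

/-- The prism between the chain `σ = {x₀ < ⋯ < xₘ}` and the subdivision of the simplex on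
`b x₀, …, b xₘ`: its `j`-th cell is the subdivision of `b x₀, …, b xⱼ` joined with
`{xⱼ < ⋯ < xₘ}`. -/
noncomputable def prism (b : L → L) (σ : Finset L) : MvPolynomial L (ZMod 2) :=
  ∑ y ∈ σ, subdivision b {x ∈ σ | x ≤ y} * ∏ x ∈ σ with y ≤ x, X x

variable (b : L → L) {σ : Finset L}

lemma prism_empty : prism b ∅ = 0 :=
  sum_empty

lemma prism_insert {a : L} (ha : ∀ x ∈ σ, x < a) :
    prism b (insert a σ) = X a * (prism b σ + subdivision b (insert a σ)) := by
  have hnotMem : a ∉ σ := fun h => (ha a h).false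
  have htop : {x ∈ insert a σ | x ≤ a} = insert a σ :=
    filter_true_of_mem ((forall_mem_insert _ _ _).2 ⟨le_rfl, fun x hx => (ha x hx).le⟩)
  have htop' : {x ∈ insert a σ | a ≤ x} = {a} := by
    rw [filter_insert, if_pos le_rfl, filter_false_of_mem fun x hx => (ha x hx).not_ge,
      insert_empty]
  have hcell : ∀ y ∈ σ, subdivision b {x ∈ insert a σ | x ≤ y} *
      ∏ x ∈ insert a σ with y ≤ x, (X x : MvPolynomial L (ZMod 2)) =
        X a * (subdivision b {x ∈ σ | x ≤ y} * ∏ x ∈ σ with y ≤ x, X x) := fun y hy => by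
    rw [filter_insert, if_neg (ha y hy).not_ge, filter_insert, if_pos (ha y hy).le,
      prod_insert fun h => hnotMem (mem_filter.1 h).1, mul_left_comm]
  rw [prism, sum_insert hnotMem, htop, htop', prod_singleton, sum_congr rfl hcell, ← mul_sum,
    ← prism]
  ring

lemma boundary_prism (hσ : IsChain (· ≤ ·) (σ : Set L)) :
    boundary L (prism b σ) =
      ∏ x ∈ σ, X x + subdivision b σ + ∑ x ∈ σ, prism b (σ.erase x) := by
  refine isChain_induction_on_max hσ ?_ fun a σ ha ih => ?_
  · simp [prism_empty, subdivision_empty, CharTwo.add_self_eq_zero]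
  have hnotMem : a ∉ σ := fun h => (ha a h).false
  have hfaces : ∑ x ∈ σ, prism b (insert a (σ.erase x)) = X a *
      (∑ x ∈ σ, prism b (σ.erase x) + ∑ x ∈ σ, subdivision b (insert a (σ.erase x))) := by
    rw [← sum_add_distrib, mul_sum]
    exact sum_congr rfl fun x _ => prism_insert b fun y hy => ha y (mem_of_mem_erase hy)
  rw [prism_insert b ha, boundary_X_mul, map_add, ih, boundary_subdivision,
    sum_erase_insert hnotMem, sum_erase_insert hnotMem, hfaces, prod_insert hnotMem]
  linear_combination X a * CharTwo.add_self_eq_zero (subdivision b σ)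

lemma card_support_prism_le (hσ : IsChain (· ≤ ·) (σ : Set L)) :
    #(prism b σ).support ≤ ∑ j ∈ Icc 1 #σ, j ! := by
  refine isChain_induction_on_max hσ ?_ fun a σ ha ih => ?_
  · simp [prism_empty]
  have hcard : #(insert a σ) = #σ + 1 := card_insert_of_notMem fun h => (ha a h).false
  have hsubdivision := card_support_subdivision_le b (insert a σ)
  rw [hcard] at hsubdivision ⊢
  rw [prism_insert b ha, card_support_X_mul, sum_Icc_succ_top (by omega)]
  exact (card_support_add_le _ _).trans (add_le_add ih hsubdivision)

variable {b}

lemma prism_mem_chainPolynomials (hσ : IsChain (· ≤ ·) (σ : Set L)) (hle : ∀ x ∈ σ, b x ≤ x)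
    (hb : ∀ x ∈ σ, b x ≠ ⊥) :
    prism b σ ∈ chainPolynomials {x | ⊥ < x ∧ ∃ y ∈ σ, x ≤ y} := by
  revert hle hb
  refine isChain_induction_on_max hσ (fun _ _ => prism_empty b ▸ zero_mem _)
    fun a σ ha ih hle hb => ?_
  obtain ⟨hlea, hleσ⟩ := (forall_mem_insert _ _ _).1 hle
  obtain ⟨hba, hbσ⟩ := (forall_mem_insert _ _ _).1 hb
  have hsup : (insert a σ).sup b ≤ a :=
    Finset.sup_le ((forall_mem_insert _ _ _).2 ⟨hlea, fun x hx => (hleσ x hx).trans (ha x hx).le⟩)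
  have hlower : {x | ⊥ < x ∧ ∃ y ∈ σ, x ≤ y} ⊆ Set.Ioc ⊥ a :=
    fun x ⟨hx, y, hy, hxy⟩ => ⟨hx, hxy.trans (ha y hy).le⟩
  have hupper : Set.Ioc ⊥ a ⊆ {x | ⊥ < x ∧ ∃ y ∈ insert a σ, x ≤ y} :=
    fun x ⟨hx, hxa⟩ => ⟨hx, a, mem_insert_self a σ, hxa⟩
  have hprism : prism b σ ∈ chainPolynomials (Set.Ioc ⊥ a) :=
    chainPolynomials_mono hlower (ih hleσ hbσ)
  have hsubdivision : subdivision b (insert a σ) ∈ chainPolynomials (Set.Ioc ⊥ a) :=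
    chainPolynomials_mono (Set.Ioc_subset_Ioc_right hsup) (subdivision_mem_chainPolynomials hb)
  rw [prism_insert b ha]
  exact chainPolynomials_mono hupper
    (X_mul_mem_chainPolynomials (add_mem hprism hsubdivision) (ne_bot_of_le_ne_bot hba hlea))

end Prism

section Filling

variable {L : Type*} [DecidableEq L] [SemilatticeSup L] [BoundedOrder L] [DecidableLE L]
  (b : L → L) {σ : Finset L}

/-- The cone over the chain `σ` with apex `⊤`, pushed into the proper part of `L`: the prism on
`σ` followed by the subdivision of the simplex on `b ⊤` and `b x`, `x ∈ σ`. -/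
noncomputable def filling (b : L → L) (σ : Finset L) : MvPolynomial L (ZMod 2) :=
  prism b σ + subdivision b (insert ⊤ σ)

lemma boundary_filling (hσ : IsChain (· ≤ ·) (σ : Set L)) (htop : ⊤ ∉ σ) :
    boundary L (filling b σ) = ∏ x ∈ σ, X x + ∑ x ∈ σ, filling b (σ.erase x) := by
  simp only [filling, map_add, boundary_prism b hσ, boundary_subdivision, sum_erase_insert htop,
    sum_add_distrib]
  linear_combination CharTwo.add_self_eq_zero (subdivision b σ)

lemma card_support_filling_le (hσ : IsChain (· ≤ ·) (σ : Set L)) (htop : ⊤ ∉ σ) :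
    #(filling b σ).support ≤ ∑ j ∈ Icc 1 (#σ + 1), j ! := by
  have hsubdivision := card_support_subdivision_le b (insert ⊤ σ)
  rw [card_insert_of_notMem htop] at hsubdivision
  rw [sum_Icc_succ_top (by omega)]
  exact (card_support_add_le _ _).trans
    (add_le_add (card_support_prism_le b hσ) hsubdivision)

variable {b}

lemma filling_mem_chainPolynomials (hσ : IsChain (· ≤ ·) (σ : Set L))
    (hproper : (σ : Set L) ⊆ Set.Ioo ⊥ ⊤) (hle : ∀ x, b x ≤ x) (hb : ∀ x ≠ ⊥, b x ≠ ⊥)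
    (hsup : (insert ⊤ σ).sup b ≠ ⊤) : filling b σ ∈ chainPolynomials (Set.Ioo ⊥ ⊤) := by
  have hbσ : ∀ x ∈ σ, b x ≠ ⊥ := fun x hx => hb x (hproper hx).1.ne'
  refine add_mem (chainPolynomials_mono ?_ (prism_mem_chainPolynomials hσ (fun x _ => hle x) hbσ))
    (chainPolynomials_mono (Set.Ioc_subset_Ioo_right hsup.lt_top)
      (subdivision_mem_chainPolynomials ((forall_mem_insert _ _ _).2 ⟨hb ⊤ ?_, hbσ⟩)))
  · exact fun x ⟨hx, y, hy, hxy⟩ => ⟨hx, hxy.trans_lt (hproper hy).2⟩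
  · exact fun h => hsup (eq_top_iff.2 (h ▸ bot_le))

lemma isContraction_filling [Finite L] {Δ : Finset (Finset L)} {k : ℕ}
    (hΔ : IsOrderComplex Δ (Set.Ioo ⊥ ⊤)) (hle : ∀ x, b x ≤ x) (hb : ∀ x ≠ ⊥, b x ≠ ⊥)
    (hsup : ∀ σ ∈ faces Δ k, (insert ⊤ σ).sup b ≠ ⊤) :
    IsContraction Δ k fun σ => coeffChain (filling b σ) := by
  intro σ hσ τ hτ
  obtain ⟨-, hproper, hchain⟩ := (hΔ σ).1 (mem_faces.1 hσ).1
  have hmem := filling_mem_chainPolynomials hchain hproper hle hb (hsup σ hσ)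
  rw [bdry_coeffChain (fun ρ hρ hne => hΔ.mem_of_coeffChain_ne_zero hmem hρ hne) hτ,
    boundary_filling b hchain fun h => (hproper h).2.false, coeffChain_add, coeffChain_prod_X,
    coeffChain_sum]

end Filling

end Subdivision

section GeometricLattice

lemma rank_sup_atoms_le {L : Type*} [Lattice L] [OrderBot L] {rk : L → ℕ} (hrkbot : rk ⊥ = 0)
    (hrkcov : ∀ x y : L, x ⋖ y → rk y = rk x + 1)
    (hsubmod : ∀ x y : L, rk (x ⊔ y) + rk (x ⊓ y) ≤ rk x + rk y) (s : Finset L)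
    (hs : ∀ a ∈ s, IsAtom a) : rk (s.sup id) ≤ #s := by
  classical
  induction s using Finset.induction_on with
  | empty => simp [hrkbot]
  | insert a s ha ih =>
    obtain ⟨hatom, hs⟩ := (forall_mem_insert _ _ _).1 hs
    have hrka : rk a = 1 := by rw [hrkcov ⊥ a hatom.bot_covBy, hrkbot]
    have hjoin := hsubmod a (s.sup id)
    have hrks := ih hs
    rw [sup_insert, card_insert_of_notMem ha, id_eq]
    omega

lemma sup_ne_top_of_card_le {ι L : Type*} [SemilatticeSup L] [BoundedOrder L] {m : ℕ}
    (hspan : ∀ s : Finset L, (∀ a ∈ s, IsAtom a) → #s ≤ m → s.sup id ≠ ⊤) {b : ι → L}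
    {s : Finset ι} (hb : ∀ i ∈ s, IsAtom (b i)) (hs : #s ≤ m) : s.sup b ≠ ⊤ := by
  classical
  simpa only [sup_image, Function.id_comp] using
    hspan (s.image b) (forall_mem_image.2 hb) (card_image_le.trans hs)

theorem homogeneous_geometric_lattice_expansion_general {L : Type*} [DecidableEq L] [Finite L]
    [SemilatticeSup L] [BoundedOrder L] (k : ℕ)
    (hspan : ∀ s : Finset L, (∀ a ∈ s, IsAtom a) → #s ≤ k + 2 → s.sup id ≠ ⊤)
    (Δ : Finset (Finset L)) (hΔ : IsOrderComplex Δ (Set.Ioo ⊥ ⊤))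
    (hhom : ∀ σ ∈ faces Δ (k + 1), ∀ τ ∈ faces Δ (k + 1), ∃ e : L ≃o L, σ.image e = τ) :
    (#(faces Δ (k + 1)) : ENNReal) /
        (#(faces Δ k) * (∑ j ∈ Icc 1 (k + 2), Nat.factorial j : ℕ)) ≤ cheeger Δ k := by
  classical
  have : Finite (L ≃o L) := DFunLike.finite _
  have hatom : ∀ x : L, ∃ a ≤ x, x ≠ ⊥ → IsAtom a := fun x =>
    (eq_bot_or_exists_atom_le x).elim (fun h => ⟨x, le_rfl, fun hx => (hx h).elim⟩)
      fun ⟨a, ha, hax⟩ => ⟨a, hax, fun _ => ha⟩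
  choose b hle hb using hatom
  have hsup : ∀ σ ∈ faces Δ k, (insert ⊤ σ).sup b ≠ ⊤ := fun σ hσ => by
    obtain ⟨⟨x, hx⟩, hproper, -⟩ := (hΔ σ).1 (mem_faces.1 hσ).1
    have hbot : ∀ y ∈ insert ⊤ σ, y ≠ ⊥ := (forall_mem_insert _ _ _).2
      ⟨((hproper hx).1.trans (hproper hx).2).ne', fun y hy => (hproper hy).1.ne'⟩
    have hcard : #(insert ⊤ σ) ≤ k + 2 :=
      (card_insert_le ⊤ σ).trans_eq (by rw [(mem_faces.1 hσ).2])
    exact sup_ne_top_of_card_le hspan (fun y hy => hb y (hbot y hy)) hcard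
  refine (isContraction_filling hΔ hle (fun x hx => (hb x hx).1) hsup).div_le_cheeger
    (G := L ≃o L) hΔ.isComplex (fun e σ hσ => hΔ.image_mem e hσ) hhom fun σ hσ => ?_
  obtain ⟨-, hproper, hchain⟩ := (hΔ σ).1 (mem_faces.1 hσ).1
  refine (cnorm_coeffChain_le _ _ _).trans ?_
  have hcard := card_support_filling_le b hchain fun h => (hproper h).2.false
  rwa [(mem_faces.1 hσ).2] at hcard

end GeometricLattice

/-- **Expansion of homogeneous geometric lattices**: if `L` is a finite geometric lattice
of rank `n ≥ 3` whose automorphism group acts transitively on maximal chains of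
`L̄ = L ∖ {⊥, ⊤}`, and `Δ` is the order complex of `L̄`, then
`h^{n-3}(Δ) ≥ f_{n-2}(Δ) / (f_{n-3}(Δ) ⬝ Σ_{j=1}^{n-1} j!)`. -/
theorem homogeneous_geometric_lattice_expansion
    {L : Type*} [DecidableEq L] [Fintype L] [Lattice L] [BoundedOrder L]
    (n : ℕ) (hn : 3 ≤ n) (rk : L → ℕ)
    (hrkbot : rk ⊥ = 0) (hrktop : rk ⊤ = n)
    (hrkcov : ∀ x y : L, x ⋖ y → rk y = rk x + 1)
    (hsubmod : ∀ x y : L, rk (x ⊔ y) + rk (x ⊓ y) ≤ rk x + rk y)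
    (hatomistic : ∀ x : L, ∃ s : Finset L, (∀ a ∈ s, IsAtom a) ∧ x = s.sup id)
    (Δ : Finset (Finset L))
    (hΔ : ∀ σ : Finset L, σ ∈ Δ ↔
      σ.Nonempty ∧ (∀ a ∈ σ, a ≠ ⊥ ∧ a ≠ ⊤) ∧ ∀ a ∈ σ, ∀ b ∈ σ, a ≤ b ∨ b ≤ a)
    (hhom : ∀ σ ∈ faces Δ (n - 2), ∀ τ ∈ faces Δ (n - 2),
      ∃ e : L ≃o L, σ.image e = τ) :
    ((faces Δ (n - 2)).card : ENNReal) /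
        (((faces Δ (n - 3)).card : ENNReal) *
          ((∑ j ∈ Finset.Icc 1 (n - 1), Nat.factorial j : ℕ) : ENNReal)) ≤
      cheeger Δ (n - 3) := by
  obtain ⟨k, rfl⟩ := Nat.exists_eq_add_of_le' hn
  exact homogeneous_geometric_lattice_expansion_general k (fun s hs hcard htop =>
    absurd (htop ▸ rank_sup_atoms_le hrkbot hrkcov hsubmod s hs) (by omega)) Δ
    (isOrderComplex_Ioo_iff.2 hΔ) hhom
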